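/- Let A be an m-by-n monotone column matrix with m ≥ n, let Z_n = diag(z_1,…,z_n), and let J_{m,n} be the m-by-n all-ones matrix. Then for every k ≤ n, the k-permanent per_k(J_{m,n} Z_n + A) is a real stable polynomial in z_1,…,z_n. -/

import Mathlib

/-!
Fix `w` in the open upper half-plane; the `k`-permanent of `(w_j + a_{ij})` has to be nonzero.

*From `k`-permanents to permanents.* Pad the matrix with constant columns to an `m × m` matrix and
replace `w_j` by `w_j + τ`. The permanent becomes a polynomial in `τ` whose coefficient of `τ^(n-k)`
is a nonzero multiple of the `k`-permanent (`perK_eq_coeff`). Once permanents of square monotone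
column matrices are known to be stable, this polynomial has all its roots in the open lower
half-plane, so by Gauss–Lucas none of its coefficients up to its degree vanishes
(`coeff_ne_zero_of_roots_im_neg`).

*From monotone columns to 0/1 columns.* Expand the permanent along one column as
`∑ (z + a_i) M_i`, with `T = ∑ M_i`. Nonvanishing for all `z` in the upper half-plane says that
`Im (∑ a_i M_i / T) ≥ 0`, and this condition is linear in `a`. Decreasing vectors are the cone
generated by `±1` and the indicators of initial segments, so it is enough to treat the latter
(`bijPerm_monotone_ne_zero`).

*0/1 columns.* After a Möbius change of variables and a small rotation, such a matrix is a Ferrers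
matrix: rows and columns are interleaved on a line, each carries a label in the upper half-plane,
and the `(i, j)` entry is the label of whichever of `i`, `j` comes first. Suppose the line starts
with `s ≥ 1` rows (otherwise transpose), whose labels factor out, followed by a column labelled
`u`. If `Q` is the minor deleting that column and one of these rows, expansion along the column
shows that the permanent is a nonzero multiple of `s Q + u ∂Q`, where `∂` is the derivative along
the shift of all labels other than those of the initial rows (`bijPerm_expand`). By induction `Q` has
no zeros when labels are shifted by `τ` with `Im τ ≥ 0`, so `Im (∂Q / Q) ≤ 0`, whereas
`Im (-s / u) > 0`; hence the permanent does not vanish (`ferrersNonvanishing`).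
-/

open MvPolynomial

/-- The `k`-permanent of an `m × n` matrix: sum over all `k`-subsets `R` of rows,
`k`-subsets `C` of columns, and bijections `β : R → C` of `Π_{i ∈ R} h_{i,β(i)}`. -/
noncomputable def perK {m n : ℕ} {R : Type*} [CommRing R]
    (H : Matrix (Fin m) (Fin n) R) (k : ℕ) : R :=
  ∑ Rs ∈ Finset.univ.filter (fun Rs : Finset (Fin m) => Rs.card = k),
    ∑ Cs ∈ Finset.univ.filter (fun Cs : Finset (Fin n) => Cs.card = k),
      ∑ β : {i // i ∈ Rs} ≃ {j // j ∈ Cs},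
        ∏ i : {i // i ∈ Rs}, H i.val (β i).val

/-- A polynomial `f ∈ ℂ[z_1,…,z_n]` is stable if either `f ≡ 0` or
`f(w) ≠ 0` whenever all coordinates of `w` have positive imaginary part. -/
def IsStable {σ : Type*} (f : MvPolynomial σ ℂ) : Prop :=
  f = 0 ∨ ∀ w : σ → ℂ, (∀ j, 0 < (w j).im) → MvPolynomial.eval w f ≠ 0

/-- A real polynomial is real stable if it is stable as a complex polynomial. -/
def RealStable {σ : Type*} (f : MvPolynomial σ ℝ) : Prop :=
  IsStable (MvPolynomial.map (algebraMap ℝ ℂ) f)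

/-- A monotone column matrix: entries weakly decrease down each column. -/
def MonotoneColumn {m n : ℕ} (A : Matrix (Fin m) (Fin n) ℝ) : Prop :=
  ∀ i i' : Fin m, ∀ j : Fin n, i ≤ i' → A i' j ≤ A i j

/-! ### Permanents as sums over bijections -/

/-- The permanent of a matrix whose rows and columns are indexed by arbitrary finite types,
as a sum over bijections from columns to rows (so `0` when there are none). Having two index types
makes passing to minors and transposes painless. -/
noncomputable def bijPerm {I J R : Type*} [Fintype I] [Fintype J] [DecidableEq I]
    [DecidableEq J] [CommSemiring R] (B : I → J → R) : R :=
  ∑ σ : J ≃ I, ∏ j, B (σ j) j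

lemma bijPerm_transpose {I J R : Type*} [Fintype I] [Fintype J] [DecidableEq I]
    [DecidableEq J] [CommSemiring R] (B : I → J → R) :
    bijPerm (fun j i => B i j) = bijPerm B := by
  unfold bijPerm
  refine Fintype.sum_equiv ⟨Equiv.symm, Equiv.symm, fun _ => rfl, fun _ => rfl⟩ _ _ fun σ => ?_
  refine Fintype.prod_equiv σ _ _ fun i => ?_
  simp

lemma bijPerm_mul_row {I J R : Type*} [Fintype I] [Fintype J] [DecidableEq I]
    [DecidableEq J] [CommSemiring R] (d : I → R) (B : I → J → R) :
    bijPerm (fun i j => d i * B i j) = (∏ i, d i) * bijPerm B := by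
  unfold bijPerm
  rw [Finset.mul_sum]
  refine Finset.sum_congr rfl fun σ _ => ?_
  rw [Finset.prod_mul_distrib, Equiv.prod_comp σ d]

lemma bijPerm_mul_col {I J R : Type*} [Fintype I] [Fintype J] [DecidableEq I]
    [DecidableEq J] [CommSemiring R] (d : J → R) (B : I → J → R) :
    bijPerm (fun i j => d j * B i j) = (∏ j, d j) * bijPerm B := by
  unfold bijPerm
  rw [Finset.mul_sum]
  exact Finset.sum_congr rfl fun σ _ => Finset.prod_mul_distrib

/-- The bijection `J ≃ I` obtained from a bijection between the parts cut out by `p` and `q` and a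
bijection between the complementary parts. -/
def glue {I J : Type*} (p : J → Prop) (q : I → Prop) [DecidablePred p] [DecidablePred q]
    (β : {j // p j} ≃ {i // q i}) (γ : {j // ¬ p j} ≃ {i // ¬ q i}) : J ≃ I :=
  (Equiv.sumCompl p).symm.trans ((Equiv.sumCongr β γ).trans (Equiv.sumCompl q))

lemma glue_pos {I J : Type*} {p : J → Prop} {q : I → Prop} [DecidablePred p] [DecidablePred q]
    (β : {j // p j} ≃ {i // q i}) (γ : {j // ¬ p j} ≃ {i // ¬ q i}) (j : {j // p j}) :
    glue p q β γ j.1 = (β j).1 := by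
  simp [glue, Equiv.sumCompl_symm_apply_of_pos j.2]

lemma glue_neg {I J : Type*} {p : J → Prop} {q : I → Prop} [DecidablePred p] [DecidablePred q]
    (β : {j // p j} ≃ {i // q i}) (γ : {j // ¬ p j} ≃ {i // ¬ q i}) (j : {j // ¬ p j}) :
    glue p q β γ j.1 = (γ j).1 := by
  simp [glue, Equiv.sumCompl_symm_apply_of_neg j.2]

lemma sum_glue {I J M : Type*} [Fintype I] [Fintype J] [DecidableEq I] [DecidableEq J]
    [AddCommMonoid M] (p : J → Prop) (q : I → Prop) [DecidablePred p] [DecidablePred q]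
    [Fintype {j // p j}] [Fintype {i // q i}] (f : (J ≃ I) → M) :
    ∑ σ : J ≃ I with ∀ j, p j ↔ q (σ j), f σ =
      ∑ β : {j // p j} ≃ {i // q i}, ∑ γ : {j // ¬ p j} ≃ {i // ¬ q i}, f (glue p q β γ) := by
  rw [← Finset.sum_product', eq_comm]
  refine Finset.sum_bij (fun x _ => glue p q x.1 x.2) ?_ ?_ ?_ ?_
  · rintro ⟨β, γ⟩ -
    simp only [Finset.mem_filter, Finset.mem_univ, true_and]
    intro j
    by_cases h : p j
    · have := glue_pos β γ ⟨j, h⟩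
      simp only at this
      simp [this, h, (β ⟨j, h⟩).2]
    · have := glue_neg β γ ⟨j, h⟩
      simp only at this
      simp [this, h, (γ ⟨j, h⟩).2]
  · rintro ⟨β, γ⟩ - ⟨β', γ'⟩ - h
    simp only at h
    ext j
    · simp only
      rw [← glue_pos β γ, h, glue_pos]
    · simp only
      rw [← glue_neg β γ, h, glue_neg]
  · intro σ hσ
    simp only [Finset.mem_filter, Finset.mem_univ, true_and] at hσ
    refine ⟨(σ.subtypeEquiv hσ, σ.subtypeEquiv fun j => not_congr (hσ j)), Finset.mem_univ _, ?_⟩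
    ext j
    by_cases h : p j
    · exact glue_pos (p := p) (q := q) (σ.subtypeEquiv hσ) _ ⟨j, h⟩
    · exact glue_neg (p := p) (q := q) _ (σ.subtypeEquiv fun j => not_congr (hσ j)) ⟨j, h⟩
  · intros; rfl

/-- If the summand depends only on the restriction of `σ` to `p`, then each `β : p ≃ q` is counted
once for each bijection between the complements. -/
lemma sum_glue_const {I J M : Type*} [Fintype I] [Fintype J] [DecidableEq I] [DecidableEq J]
    [AddCommMonoid M] (p : J → Prop) (q : I → Prop) [DecidablePred p] [DecidablePred q]
    [Fintype {j // p j}] [Fintype {i // q i}] (hIJ : Fintype.card I = Fintype.card J)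
    (f : (J ≃ I) → M) (g : ({j // p j} ≃ {i // q i}) → M)
    (h : ∀ β γ, f (glue p q β γ) = g β) :
    ∑ σ : J ≃ I with ∀ j, p j ↔ q (σ j), f σ =
      (Fintype.card {j // ¬ p j}).factorial • ∑ β : {j // p j} ≃ {i // q i}, g β := by
  rw [sum_glue, Finset.smul_sum]
  refine Finset.sum_congr rfl fun β _ => ?_
  have hc : Fintype.card {j // ¬ p j} = Fintype.card {i // ¬ q i} := by
    rw [Fintype.card_subtype_compl, Fintype.card_subtype_compl, hIJ, Fintype.card_congr β]
  simp only [h, Finset.sum_const, Finset.card_univ]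
  rw [Fintype.card_equiv (Fintype.equivOfCardEq hc)]

/-- The terms of the permanent with `c ↦ r`, stripped of their `(r, c)` entry, sum to the permanent
of the minor deleting row `r` and column `c`. -/
lemma sum_fixed_eq_bijPerm {I J R : Type*} [Fintype I] [Fintype J] [DecidableEq I]
    [DecidableEq J] [CommSemiring R] (hIJ : Fintype.card I = Fintype.card J)
    (r : I) (c : J) (B : I → J → R) :
    ∑ σ : J ≃ I with σ c = r, ∏ j ∈ Finset.univ.erase c, B (σ j) j =
      bijPerm (fun (i : {i // i ≠ r}) (j : {j // j ≠ c}) => B i.1 j.1) := by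
  have h1 : (Finset.univ.filter fun σ : J ≃ I => σ c = r) =
      Finset.univ.filter fun σ : J ≃ I => ∀ j, j ≠ c ↔ σ j ≠ r := by
    ext σ
    simp only [Finset.mem_filter, Finset.mem_univ, true_and]
    constructor
    · rintro rfl j
      simp
    · intro h
      by_contra h'
      exact (h c).2 h' rfl
  rw [h1, sum_glue_const (fun j => j ≠ c) (fun i => i ≠ r) hIJ _
    (fun β => ∏ j, B (β j).1 j.1)]
  · simp [bijPerm]
  · intro β γ
    rw [Finset.prod_subtype (p := fun j => j ≠ c) _ (by simp)]
    refine Fintype.prod_congr _ _ fun j => ?_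
    rw [glue_pos]

open Polynomial in
/-- Expansion along a column `c`, when the rows in `S` are constant equal to `y` and column `c` is
equal to `u` outside `S`. Let `Q` be the minor deleting `c` and a row `r ∈ S`. For `i ∈ S` the minor
deleting `c` and `i` also has permanent `per Q`. For `i ∉ S` it is, up to row order, `Q` with row
`i` replaced by the constant row `y`, so these minors sum to `y` times the derivative at `0` of the
permanent `p` of `Q` with the variable added to each entry in a row outside `S`. -/
lemma bijPerm_expand {I J : Type*} [Fintype I] [Fintype J] [DecidableEq I]
    [DecidableEq J] (B : I → J → ℂ) (c : J) (r : I) (S : Finset I) (hr : r ∈ S) (y u : ℂ)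
    (hS : ∀ i ∈ S, ∀ j, B i j = y) (hc : ∀ i ∉ S, B i c = u) (p : ℂ[X])
    (hp : p = ∑ σ : J ≃ I with σ c = r, ∏ j ∈ Finset.univ.erase c,
      (Polynomial.C (B (σ j) j) + Polynomial.X * Polynomial.C (if σ j ∈ S then 0 else 1))) :
    bijPerm B = y * (S.card * p.eval 0 + u * p.derivative.eval 0) := by
  set D : I → ℂ := fun i => ∑ σ : J ≃ I with σ c = i, ∏ j ∈ Finset.univ.erase c, B (σ j) j with hD
  have h0 : bijPerm B = ∑ i, B i c * D i := by
    unfold bijPerm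
    rw [← Finset.sum_fiberwise Finset.univ (fun σ : J ≃ I => σ c)]
    refine Finset.sum_congr rfl fun i _ => ?_
    rw [hD, Finset.mul_sum]
    refine Finset.sum_congr rfl fun σ hσ => ?_
    rw [← Finset.mul_prod_erase Finset.univ _ (Finset.mem_univ c), (Finset.mem_filter.1 hσ).2]
  -- transposing the values `i` and `r` of `σ` turns the minor at `(i, c)` into `Q` with row `i` constant
  have h1 : ∀ i, D i = ∑ σ : J ≃ I with σ c = r, ∏ j ∈ Finset.univ.erase c,
      if σ j = i then y else B (σ j) j := by
    intro i
    rw [hD]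
    refine Finset.sum_bij' (fun σ _ => σ.trans (Equiv.swap i r))
      (fun σ _ => σ.trans (Equiv.swap i r)) ?_ ?_ ?_ ?_ ?_
    · intro σ hσ
      simpa using (by rw [(Finset.mem_filter.1 hσ).2]; simp)
    · intro σ hσ
      simpa using (by rw [(Finset.mem_filter.1 hσ).2]; simp)
    · intro σ _; ext; simp
    · intro σ _; ext; simp
    · intro σ hσ
      have hσ := (Finset.mem_filter.1 hσ).2
      refine Finset.prod_congr rfl fun j hj => ?_
      have hj := (Finset.mem_erase.1 hj).1
      have hji : σ j ≠ i := fun h => hj (σ.injective (h.trans hσ.symm))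
      by_cases h : σ j = r
      · simp [h, hS r hr]
      · simp only [Equiv.trans_apply, Equiv.swap_apply_of_ne_of_ne hji h, if_neg hji]
  have h2 : ∀ i ∈ S, D i = p.eval 0 := by
    intro i hi
    rw [h1, hp, eval_finsetSum]
    refine Finset.sum_congr rfl fun σ _ => ?_
    rw [Polynomial.eval_prod]
    refine Finset.prod_congr rfl fun j _ => ?_
    by_cases h : σ j = i
    · rw [if_pos h, h, hS i hi]
      simp only [Polynomial.eval_add, Polynomial.eval_mul, Polynomial.eval_C, Polynomial.eval_X, zero_mul, add_zero]
    · rw [if_neg h]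
      simp only [Polynomial.eval_add, Polynomial.eval_mul, Polynomial.eval_C, Polynomial.eval_X, zero_mul, add_zero]
  have h3 : ∑ i ∈ Sᶜ, D i = y * p.derivative.eval 0 := by
    simp only [h1]
    rw [Finset.sum_comm, hp, derivative_sum, eval_finsetSum, Finset.mul_sum]
    refine Finset.sum_congr rfl fun σ hσ => ?_
    have hσ := (Finset.mem_filter.1 hσ).2
    rw [derivative_prod_finset, eval_finsetSum, Finset.mul_sum]
    have : Sᶜ = Finset.univ.filter fun i => i ∉ S := by ext; simp
    rw [this, Finset.sum_filter, ← Equiv.sum_comp σ,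
      ← Finset.add_sum_erase Finset.univ _ (Finset.mem_univ c)]
    rw [hσ, if_neg (by simpa using hr), zero_add]
    refine Finset.sum_congr rfl fun j₀ hj₀ => ?_
    by_cases h : σ j₀ ∈ S
    · simp [h]
    · rw [if_pos h, ← Finset.mul_prod_erase _ _ hj₀, if_pos rfl]
      simp only [h, Polynomial.eval_mul, Polynomial.eval_prod]
      simp only [if_false, map_one, derivative_add, derivative_C, derivative_X, mul_one,
        zero_add, Polynomial.eval_one]
      congr 1
      refine Finset.prod_congr rfl fun j hj => ?_
      rw [if_neg fun h => (Finset.mem_erase.1 hj).1 (σ.injective h)]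
      simp only [Polynomial.eval_add, Polynomial.eval_mul, Polynomial.eval_C, Polynomial.eval_X, zero_mul, add_zero]
  rw [h0, ← Finset.sum_add_sum_compl S]
  have h4 : ∑ i ∈ S, B i c * D i = y * (S.card * p.eval 0) := by
    rw [Finset.sum_congr rfl fun i hi => by rw [hS i hi c, h2 i hi]]
    simp; ring
  have h5 : ∑ i ∈ Sᶜ, B i c * D i = u * (y * p.derivative.eval 0) := by
    rw [← h3, Finset.mul_sum]
    exact Finset.sum_congr rfl fun i hi => by rw [hc i (Finset.mem_compl.1 hi)]
  rw [h4, h5]; ring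

/-! ### Polynomials with roots in the lower half-plane -/

open Polynomial in
/-- If all roots lie in the open lower half-plane, the logarithmic derivative `∑ 1 / (w - r)` maps
the closed upper half-plane into the closed lower one, strictly unless `p` is constant. -/
lemma logDeriv_im_nonpos (p : ℂ[X]) (hp : ∀ w : ℂ, 0 ≤ w.im → p.eval w ≠ 0) (w : ℂ)
    (hw : 0 ≤ w.im) :
    (p.derivative.eval w / p.eval w).im ≤ 0 ∧
      (p.natDegree ≠ 0 → (p.derivative.eval w / p.eval w).im < 0) := by
  rw [(IsAlgClosed.splits p).eval_derivative_div_eval_of_ne_zero (hp w hw)]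
  have him : ∀ s : Multiset ℂ, (∀ r ∈ s, r.im < 0) →
      ((s.map fun z => 1 / (w - z)).sum).im ≤ 0 ∧
      (s ≠ 0 → ((s.map fun z => 1 / (w - z)).sum).im < 0) := by
    intro s
    induction s using Multiset.induction with
    | empty => simp
    | cons a s ih =>
      intro h
      have h1 := (ih fun r hr => h r (Multiset.mem_cons_of_mem hr)).1
      have ha := h a (Multiset.mem_cons_self a s)
      have h2 : (1 / (w - a)).im < 0 := by
        have : 0 < (w - a).im := by simp; linarith
        rw [one_div, Complex.inv_im]
        apply div_neg_of_neg_of_pos (by linarith)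
        apply Complex.normSq_pos.2
        intro h0; simp [h0] at this
      simp only [Multiset.map_cons, Multiset.sum_cons, Complex.add_im]
      exact ⟨by linarith, fun _ => by linarith⟩
  have hroots : ∀ r ∈ p.roots, r.im < 0 := by
    intro r hr
    by_contra h
    exact hp r (not_lt.1 h) (isRoot_of_mem_roots hr)
  refine ⟨(him _ hroots).1, fun hd => (him _ hroots).2 fun h0 => hd ?_⟩
  rw [(IsAlgClosed.splits p).natDegree_eq_card_roots, h0, Multiset.card_zero]

open Polynomial in
/-- By induction on `t`, since derivatives again have all their roots in the open lower half-plane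
(Gauss–Lucas). -/
lemma coeff_ne_zero_of_roots_im_neg (t : ℕ) (p : ℂ[X]) (hp : ∀ w : ℂ, 0 ≤ w.im → p.eval w ≠ 0)
    (ht : t ≤ p.natDegree) : p.coeff t ≠ 0 := by
  induction t generalizing p with
  | zero =>
    rw [coeff_zero_eq_eval_zero]
    exact hp 0 le_rfl
  | succ t ih =>
    have h := ih p.derivative (fun w hw h0 => ?_) ?_
    · rw [coeff_derivative] at h
      exact left_ne_zero_of_mul h
    · have := (logDeriv_im_nonpos p hp w hw).2 (by omega)
      simp [h0] at this
    · rw [natDegree_derivative]; omega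

/-! ### Ferrers matrices -/

/-- Every row `i` carries a position `α i` and a label `y i`, every column `j` a position `β j` and a
label `x j`; the `(i, j)` entry is the label of whichever comes first. Up to ordering rows and
columns the two kinds of entries fill complementary Ferrers shapes. When no row and column share a
position, the description is symmetric under transposition. -/
def ferrers {I J : Type} (α : I → ℕ) (β : J → ℕ) (y : I → ℂ) (x : J → ℂ) (i : I) (j : J) : ℂ :=
  if α i < β j then y i else x j

/-- The permanent of an `N × N` `ferrers` matrix whose labels all lie in the open upper half-plane
does not vanish. -/
def FerrersNonvanishing (N : ℕ) : Prop :=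
  ∀ (I J : Type) [Fintype I] [Fintype J] [DecidableEq I] [DecidableEq J],
    Fintype.card I = N → Fintype.card J = N →
    ∀ (α : I → ℕ) (β : J → ℕ) (y : I → ℂ) (x : J → ℂ), (∀ i j, α i ≠ β j) →
      (∀ i, 0 < (y i).im) → (∀ j, 0 < (x j).im) → bijPerm (ferrers α β y x) ≠ 0

open Polynomial in
/-- Inductive step when the first position is a row, in the case where all rows preceding the first
column `c` have label `I`. By `bijPerm_expand` a zero would force `p' / p = -|S| / x c` at `0`, which
has positive imaginary part, contrary to `logDeriv_im_nonpos`. -/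
lemma ferrers_step_const {N : ℕ} (ih : FerrersNonvanishing N)
    {I J : Type} [Fintype I] [Fintype J] [DecidableEq I] [DecidableEq J]
    (hI : Fintype.card I = N + 1) (hJ : Fintype.card J = N + 1)
    (α : I → ℕ) (β : J → ℕ) (y : I → ℂ) (x : J → ℂ) (hαβ : ∀ i j, α i ≠ β j)
    (hy : ∀ i, 0 < (y i).im) (hx : ∀ j, 0 < (x j).im)
    (c : J) (hc : ∀ j, β c ≤ β j) (r : I) (hr : α r < β c)
    (hyI : ∀ i, α i < β c → y i = Complex.I) :
    bijPerm (ferrers α β y x) ≠ 0 := by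
  set B := ferrers α β y x with hB
  set S : Finset I := Finset.univ.filter fun i => α i < β c with hS
  have hmem : ∀ i, i ∈ S ↔ α i < β c := by simp [hS]
  set p : ℂ[X] := ∑ σ : J ≃ I with σ c = r, ∏ j ∈ Finset.univ.erase c,
      (Polynomial.C (B (σ j) j) + Polynomial.X * Polynomial.C (if σ j ∈ S then 0 else 1)) with hp
  have hexp := bijPerm_expand B c r S ((hmem r).2 hr) Complex.I (x c)
    (fun i hi j => by
      have := (hmem i).1 hi
      rw [hB, ferrers, if_pos (this.trans_le (hc j)), hyI i this])
    (fun i hi => by rw [hB, ferrers, if_neg (fun h => hi ((hmem i).2 h))]) p hp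
  -- shifting every entry outside the rows of `S` by `w` shifts labels within the half-plane
  have hp0 : ∀ w : ℂ, 0 ≤ w.im → p.eval w ≠ 0 := by
    intro w hw
    have h1 : p.eval w = bijPerm (ferrers (fun i : {i // i ≠ r} => α i.1)
        (fun j : {j // j ≠ c} => β j.1) (fun i => if i.1 ∈ S then y i.1 else y i.1 + w)
        (fun j => x j.1 + w)) := by
      have h2 := sum_fixed_eq_bijPerm (hI.trans hJ.symm) r c
        (fun i j => B i j + w * (if i ∈ S then 0 else 1))
      rw [hp, eval_finsetSum]
      refine Eq.trans (Finset.sum_congr rfl fun σ _ => ?_) (h2.trans ?_)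
      · rw [Polynomial.eval_prod]
        refine Finset.prod_congr rfl fun j _ => ?_
        simp only [Polynomial.eval_add, Polynomial.eval_mul, Polynomial.eval_C, Polynomial.eval_X]
      · congr 1
        funext i j
        by_cases h : i.1 ∈ S
        · have := ((hmem i).1 h).trans_le (hc j)
          simp [ferrers, hB, h, this]
        · by_cases h' : α i.1 < β j.1 <;> simp [ferrers, hB, h, h']
    rw [h1]
    refine ih _ _ (by simp [Fintype.card_subtype_compl, hI]) (by simp [Fintype.card_subtype_compl, hJ])
      _ _ _ _ (fun i j => hαβ _ _) (fun i => ?_) (fun j => ?_)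
    · have := hy i.1
      split_ifs
      · exact this
      · rw [Complex.add_im]; linarith
    · have := hx j.1
      rw [Complex.add_im]; linarith
  rw [hexp]
  refine mul_ne_zero Complex.I_ne_zero fun h0 => ?_
  have hk := (logDeriv_im_nonpos p hp0 0 le_rfl).1
  have hpne := hp0 0 le_rfl
  have hxc := hx c
  have hxne : x c ≠ 0 := by intro h; simp [h] at hxc
  have hcard : (0 : ℝ) < S.card := by
    exact_mod_cast Finset.card_pos.2 ⟨r, (hmem r).2 hr⟩
  have hq : p.derivative.eval 0 / p.eval 0 = ((-(S.card : ℝ) : ℝ) : ℂ) * (x c)⁻¹ := by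
    field_simp
    push_cast
    linear_combination h0
  rw [hq, Complex.im_ofReal_mul, Complex.inv_im, neg_div, neg_mul_neg] at hk
  exact hk.not_gt (mul_pos hcard (div_pos hxc (Complex.normSq_pos.2 hxne)))

/-- The labels of the rows preceding the first column factor out of the permanent, which reduces to
the case where they are all `I`. -/
lemma ferrers_step {N : ℕ} (ih : FerrersNonvanishing N)
    {I J : Type} [Fintype I] [Fintype J] [DecidableEq I] [DecidableEq J]
    (hI : Fintype.card I = N + 1) (hJ : Fintype.card J = N + 1)
    (α : I → ℕ) (β : J → ℕ) (y : I → ℂ) (x : J → ℂ) (hαβ : ∀ i j, α i ≠ β j)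
    (hy : ∀ i, 0 < (y i).im) (hx : ∀ j, 0 < (x j).im)
    (c : J) (hc : ∀ j, β c ≤ β j) (r : I) (hr : α r < β c) :
    bijPerm (ferrers α β y x) ≠ 0 := by
  have hne : ∀ i, y i ≠ 0 := fun i h => by have := hy i; simp [h] at this
  have h1 : ferrers α β y x = fun i j => (if α i < β c then y i / Complex.I else 1) *
      ferrers α β (fun i => if α i < β c then Complex.I else y i) x i j := by
    funext i j
    by_cases h : α i < β c
    · simp [ferrers, h, h.trans_le (hc j), mul_assoc]
    · simp [ferrers, h]
  rw [h1, bijPerm_mul_row]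
  refine mul_ne_zero (Finset.prod_ne_zero_iff.2 fun i _ => ?_) ?_
  · split_ifs
    · exact div_ne_zero (hne i) Complex.I_ne_zero
    · exact one_ne_zero
  · refine ferrers_step_const ih hI hJ α β _ x hαβ (fun i => ?_) hx c hc r hr (fun i hi => if_pos hi)
    split_ifs
    · simp
    · exact hy i

theorem ferrersNonvanishing (N : ℕ) : FerrersNonvanishing N := by
  induction N with
  | zero =>
    intro I J _ _ _ _ hI hJ α β y x _ _ _
    have := Fintype.card_eq_zero_iff.1 hI
    have := Fintype.card_eq_zero_iff.1 hJ
    simp [bijPerm, Fintype.card_equiv (Equiv.equivOfIsEmpty J I)]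
  | succ N ih =>
    intro I J _ _ _ _ hI hJ α β y x hαβ hy hx
    have : Nonempty I := Fintype.card_pos_iff.1 (by omega)
    have : Nonempty J := Fintype.card_pos_iff.1 (by omega)
    obtain ⟨r, hr⟩ := Finite.exists_min α
    obtain ⟨c, hc⟩ := Finite.exists_min β
    rcases lt_or_gt_of_ne (hαβ r c) with h | h
    · exact ferrers_step ih hI hJ α β y x hαβ hy hx c hc r h
    -- the first position is a column: transpose
    · have h2 := ferrers_step ih hJ hI β α x y (fun j i => (hαβ i j).symm) hx hy r hr c h
      rw [← bijPerm_transpose] at h2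
      convert h2 using 2
      funext i j
      rcases lt_or_gt_of_ne (hαβ i j) with h | h
      · simp [ferrers, h, h.not_gt]
      · simp [ferrers, h, h.not_gt]

/-! ### Monotone column matrices -/

/-- A decreasing vector is a constant plus a nonnegative combination of indicators of initial
segments, so a linear functional killing constants is nonnegative on it as soon as it is on those
indicators. -/
lemma sum_antitone_mul_nonneg {m : ℕ} (μ : Fin m → ℝ) (h0 : ∑ i, μ i = 0)
    (hl : ∀ l : ℕ, 0 ≤ ∑ i : Fin m, (if i.1 < l then 1 else 0) * μ i)
    (a : Fin m → ℝ) (ha : ∀ i i', i ≤ i' → a i' ≤ a i) : 0 ≤ ∑ i, a i * μ i := by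
  rcases m with _ | N
  · simp
  set A : ℕ → ℝ := fun l => a ⟨min l N, by omega⟩ with hA
  have hanti : ∀ l, A (l + 1) ≤ A l := fun l => ha _ _ (by simp [Fin.le_def])
  have htel : ∀ (i M : ℕ), ∑ l ∈ Finset.range M, (A l - A (l + 1)) * (if i < l + 1 then 1 else 0) =
      if i ≤ M then A i - A M else 0 := by
    intro i M
    induction M with
    | zero =>
      rcases Nat.eq_zero_or_pos i with rfl | h
      · simp
      · simp [h.ne']
    | succ M ih =>
      rw [Finset.sum_range_succ, ih]
      rcases lt_trichotomy i (M + 1) with h | h | h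
      · simp [h.le, Nat.lt_succ_iff.1 h, h]
      · subst h; simp
      · simp [h.not_ge, (show ¬ i ≤ M by omega), h.not_gt]
  have hai : ∀ i : Fin (N + 1), a i = A N +
      ∑ l ∈ Finset.range N, (A l - A (l + 1)) * (if i.1 < l + 1 then 1 else 0) := by
    intro i
    have hi : i.1 ≤ N := by omega
    have : A i.1 = a i := by simp [hA, hi]
    rw [htel, if_pos hi, this]; ring
  have hsum : ∑ i, a i * μ i = ∑ l ∈ Finset.range N, (A l - A (l + 1)) *
      ∑ i : Fin (N + 1), (if i.1 < l + 1 then 1 else 0) * μ i := by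
    simp only [Finset.mul_sum]
    rw [Finset.sum_comm]
    have : ∑ i, A N * μ i = 0 := by rw [← Finset.mul_sum, h0, mul_zero]
    refine Eq.trans (Finset.sum_congr rfl fun i _ => ?_)
      (Finset.sum_add_distrib.trans ((congrArg (· + _) this).trans (zero_add _)))
    rw [hai i, add_mul, Finset.sum_mul]
    simp only [mul_assoc]
  rw [hsum]
  exact Finset.sum_nonneg fun l _ => mul_nonneg (sub_nonneg.2 (hanti l)) (hl _)

/-- Finitely many points of the open upper half-plane stay in it under a small rotation (up to
scaling). -/
lemma exists_rotation {J : Type} [Finite J] (x : J → ℂ) (hx : ∀ j, 0 < (x j).im) :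
    ∃ ω : ℂ, 0 < ω.im ∧ ∀ j, 0 < (ω * x j).im := by
  have h : ∀ᶠ ε : ℝ in nhdsWithin 0 (Set.Ioi 0), ∀ j, 0 < ε * (x j).re + (x j).im := by
    refine Filter.eventually_all.2 fun j => ?_
    have hc : Continuous fun ε : ℝ => ε * (x j).re + (x j).im := by fun_prop
    have := (hc.tendsto 0).eventually (lt_mem_nhds (a := 0) (by simpa using hx j))
    exact this.filter_mono nhdsWithin_le_nhds
  obtain ⟨ε, hε, hε0⟩ := (h.and self_mem_nhdsWithin).exists
  have hε0 : 0 < ε := hε0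
  refine ⟨⟨1, ε⟩, hε0, fun j => ?_⟩
  rw [Complex.mul_im]
  simp only
  linarith [hε j]

/-- Nonvanishing when every column of `a` is the indicator of an initial segment. Dividing column
`j` by `z j + 1` leaves the labels `1` and `z j / (z j + 1)`, and a small rotation `ω` moves the
label `1` into the open upper half-plane. -/
lemma bijPerm_zeroOne_ne_zero {m : ℕ} {J : Type} [Fintype J] [DecidableEq J]
    (hJ : Fintype.card J = m) (l : J → ℕ) (z : J → ℂ) (hz : ∀ j, 0 < (z j).im) :
    bijPerm (fun (i : Fin m) j => z j + ((if i.1 < l j then 1 else 0 : ℝ) : ℂ)) ≠ 0 := by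
  have hz1 : ∀ j, z j + 1 ≠ 0 := fun j h => by
    have := congrArg Complex.im h
    simp at this
    linarith [hz j]
  obtain ⟨ω, hω, hωx⟩ := exists_rotation (fun j => z j / (z j + 1)) fun j => by
    have h1 : 0 < Complex.normSq (z j + 1) := Complex.normSq_pos.2 (hz1 j)
    rw [Complex.div_im, ← sub_div]
    refine div_pos ?_ h1
    simp
    nlinarith [hz j]
  have hω0 : ω ≠ 0 := fun h => by simp [h] at hω
  have heq : (fun (i : Fin m) j => z j + ((if i.1 < l j then 1 else 0 : ℝ) : ℂ)) =
      fun i j => ((z j + 1) / ω) * ferrers (fun i : Fin m => 2 * i.1 + 1) (fun j => 2 * l j)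
        (fun _ => ω) (fun j => ω * (z j / (z j + 1))) i j := by
    funext i j
    have := hz1 j
    by_cases h : i.1 < l j
    · have h' : 2 * i.1 + 1 < 2 * l j := by omega
      simp only [ferrers, if_pos h, if_pos h']
      field_simp
      simp
    · have h' : ¬ 2 * i.1 + 1 < 2 * l j := by omega
      simp only [ferrers, if_neg h, if_neg h']
      field_simp
      simp
  rw [heq, bijPerm_mul_col]
  refine mul_ne_zero (Finset.prod_ne_zero_iff.2 fun j _ => div_ne_zero (hz1 j) hω0) ?_
  exact ferrersNonvanishing m _ _ (by simp) hJ _ _ _ _ (fun i j => by omega) (fun _ => hω) hωx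

/-- Nonvanishing for a square monotone column matrix `a`; `s` collects the columns which need not be
indicators of initial segments, and the induction trades one such column at a time for indicators. -/
theorem bijPerm_monotone_ne_zero {m : ℕ} {J : Type} [Fintype J] [DecidableEq J]
    (hJ : Fintype.card J = m) (s : Finset J) (a : Fin m → J → ℝ)
    (ha : ∀ i i' j, i ≤ i' → a i' j ≤ a i j)
    (hs : ∀ j ∉ s, ∃ l : ℕ, ∀ i : Fin m, a i j = if i.1 < l then 1 else 0)
    (z : J → ℂ) (hz : ∀ j, 0 < (z j).im) :
    bijPerm (fun (i : Fin m) j => z j + (a i j : ℂ)) ≠ 0 := by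
  induction s using Finset.induction_on generalizing a z with
  | empty =>
    choose l hl using fun j => hs j (Finset.notMem_empty j)
    simp only [hl]
    exact bijPerm_zeroOne_ne_zero hJ l z hz
  | insert c s hcs ih =>
    set M : Fin m → ℂ := fun i => ∑ σ : J ≃ Fin m with σ c = i,
      ∏ j ∈ Finset.univ.erase c, (z j + (a (σ j) j : ℂ)) with hM
    -- Laplace expansion along column `c`, as a function of that column
    have hcol : ∀ (ζ : ℂ) (b : Fin m → ℝ),
        bijPerm (fun (i : Fin m) j => Function.update z c ζ j +
          ((Function.update (a i) c (b i) j : ℝ) : ℂ)) = ∑ i, (ζ + b i) * M i := by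
      intro ζ b
      unfold bijPerm
      rw [← Finset.sum_fiberwise Finset.univ (fun σ : J ≃ Fin m => σ c)]
      refine Finset.sum_congr rfl fun i _ => ?_
      rw [hM, Finset.mul_sum]
      refine Finset.sum_congr rfl fun σ hσ => ?_
      rw [← Finset.mul_prod_erase Finset.univ _ (Finset.mem_univ c), (Finset.mem_filter.1 hσ).2]
      congr 1
      · simp
      · refine Finset.prod_congr rfl fun j hj => ?_
        simp only [Function.update_of_ne (Finset.mem_erase.1 hj).1]
    have hind : ∀ (ζ : ℂ) (l : ℕ), 0 < ζ.im →
        ∑ i : Fin m, (ζ + ((if i.1 < l then 1 else 0 : ℝ) : ℂ)) * M i ≠ 0 := by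
      intro ζ l hζ
      rw [← hcol]
      refine ih (fun i => Function.update (a i) c (if i.1 < l then 1 else 0)) ?_ ?_ _ ?_
      · intro i i' j hii
        have hii' : i.1 ≤ i'.1 := hii
        by_cases h : j = c
        · subst h
          simp only [Function.update_self]
          split_ifs
          all_goals first | omega | norm_num
        · simpa [h] using ha i i' j hii
      · intro j hj
        by_cases h : j = c
        · subst h
          exact ⟨l, fun i => by simp⟩
        · simpa [h] using hs j (by simp [h, hj])
      · intro j
        by_cases h : j = c
        · subst h; simpa using hζ
        · simpa [h] using hz j
    set T : ℂ := ∑ i, M i with hT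
    -- the constant column `I`
    have hT0 : T ≠ 0 := by
      have := hind Complex.I 0 (by simp)
      simp only [Nat.not_lt_zero, if_false, Complex.ofReal_zero, add_zero, ← Finset.mul_sum] at this
      exact right_ne_zero_of_mul this
    have hlin : ∀ (ζ : ℂ) (b : Fin m → ℝ),
        ∑ i, (ζ + b i) * M i = T * (ζ + ∑ i, b i * (M i / T)) := by
      intro ζ b
      rw [mul_add, Finset.mul_sum, mul_comm T ζ, hT, Finset.mul_sum, ← Finset.sum_add_distrib]
      refine Finset.sum_congr rfl fun i _ => ?_
      rw [← hT]
      field_simp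
    have him : ∀ b : Fin m → ℝ, (∑ i, (b i : ℂ) * (M i / T)).im = ∑ i, b i * (M i / T).im := by
      intro b
      rw [Complex.im_sum]
      simp only [Complex.im_ofReal_mul]
    have hpos := sum_antitone_mul_nonneg (fun i => (M i / T).im)
      (by rw [← Complex.im_sum, ← Finset.sum_div, div_self hT0, Complex.one_im])
      (fun l => by
        rw [← him]
        by_contra hneg
        -- this value of `z c` would be a zero in the upper half-plane
        refine hind (-∑ i : Fin m, ((if i.1 < l then 1 else 0 : ℝ) : ℂ) * (M i / T)) l ?_ ?_
        · rw [Complex.neg_im]; linarith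
        · rw [hlin]; simp)
      (fun i => a i c) (fun i i' h => ha i i' c h)
    have hfin := hcol (z c) (fun i => a i c)
    simp only [Function.update_eq_self] at hfin
    rw [hfin, hlin]
    refine mul_ne_zero hT0 fun h => ?_
    have := congrArg Complex.im h
    rw [Complex.add_im, him, Complex.zero_im] at this
    linarith [hz c]

/-! ### The k-permanent as a coefficient -/

lemma perK_zero {m n : ℕ} {R : Type*} [CommRing R] (H : Matrix (Fin m) (Fin n) R) :
    perK H 0 = 1 := by
  have h (a : ℕ) : (Finset.univ.filter fun s : Finset (Fin a) => s.card = 0) = {∅} := by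
    ext s; simp
  unfold perK
  rw [h, h, Finset.sum_singleton, Finset.sum_singleton]
  have e : {i : Fin m // i ∈ (∅ : Finset (Fin m))} ≃ {j : Fin n // j ∈ (∅ : Finset (Fin n))} :=
    Equiv.equivOfIsEmpty _ _
  simp only [Finset.univ_eq_attach, Finset.attach_empty, Finset.prod_empty, Finset.sum_const,
    Finset.card_univ, Fintype.card_equiv e]
  simp

open Polynomial in
/-- Shifting all entries of `B` by a variable and padding with `d` constant columns to a square
matrix, the `k`-permanent of `B` appears, up to a nonzero factor, as a coefficient of the permanent:
each choice of `k` rows, `k` columns and a bijection extends to `(n + d - k)!` full bijections. -/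
lemma perK_eq_coeff {n d : ℕ} (B : Fin (n + d) → Fin n → ℂ) (k : ℕ) (hk : k ≤ n) :
    (bijPerm (fun (i : Fin (n + d)) (j : Fin n ⊕ Fin d) =>
      Sum.elim (fun j => Polynomial.X + Polynomial.C (B i j))
        (fun _ => Polynomial.C Complex.I) j)).coeff (n - k) =
      Complex.I ^ d * ((n + d - k).factorial * perK B k) := by
  have h1 : ∀ σ : (Fin n ⊕ Fin d) ≃ Fin (n + d),
      (∏ j, Sum.elim (fun j' => Polynomial.X + Polynomial.C (B (σ j) j'))
        (fun _ => Polynomial.C Complex.I) j : ℂ[X]).coeff (n - k) =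
      Complex.I ^ d * ∑ t ∈ Finset.powersetCard k Finset.univ, ∏ j ∈ t, B (σ (Sum.inl j)) j := by
    intro σ
    rw [Fintype.prod_sum_type]
    simp only [Sum.elim_inl, Sum.elim_inr, Finset.prod_const, Finset.card_univ, Fintype.card_fin]
    rw [← Polynomial.C_pow, Polynomial.coeff_mul_C, Finset.prod_X_add_C_coeff _ _ (by simp), mul_comm]
    congr 3
    simp; omega
  unfold bijPerm
  rw [finsetSum_coeff]
  simp only [h1]
  rw [← Finset.mul_sum, Finset.sum_comm]
  congr 1
  unfold perK
  rw [Finset.sum_comm (s := Finset.univ.filter fun Rs : Finset (Fin (n + d)) => Rs.card = k),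
    Finset.mul_sum]
  refine Finset.sum_congr (by ext; simp) fun Cs hCs => ?_
  have hCs : Cs.card = k := (Finset.mem_filter.1 hCs).2
  rw [← Finset.sum_fiberwise Finset.univ
    (fun σ : (Fin n ⊕ Fin d) ≃ Fin (n + d) => Cs.image fun j => σ (Sum.inl j))]
  rw [Finset.mul_sum, ← Finset.sum_subset (Finset.subset_univ
    (Finset.univ.filter fun Rs : Finset (Fin (n + d)) => Rs.card = k))]
  · refine Finset.sum_congr rfl fun Rs hRs => ?_
    have hRs : Rs.card = k := (Finset.mem_filter.1 hRs).2
    set P : Fin n ⊕ Fin d → Prop := fun j => j ∈ Cs.map Function.Embedding.inl with hP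
    have h2 : (Finset.univ.filter fun σ : (Fin n ⊕ Fin d) ≃ Fin (n + d) =>
        (Cs.image fun j => σ (Sum.inl j)) = Rs) =
        Finset.univ.filter fun σ => ∀ j, P j ↔ σ j ∈ Rs := by
      ext σ
      simp only [Finset.mem_filter, Finset.mem_univ, true_and, hP]
      constructor
      · rintro rfl j
        simp
      · intro h
        refine Finset.ext fun i => ?_
        obtain ⟨j, rfl⟩ := σ.surjective i
        rw [← h j]
        simp
    rw [h2]
    let e : {j // j ∈ Cs} ≃ {j // P j} :=
      { toFun := fun j => ⟨Sum.inl j.1, Finset.mem_map.2 ⟨j.1, j.2, rfl⟩⟩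
        invFun := fun j => ⟨Sum.elim id (fun _ => (Classical.choose (Finset.mem_map.1 j.2))) j.1, by
          obtain ⟨j, hj⟩ := j
          obtain ⟨j', hj', rfl⟩ := Finset.mem_map.1 hj
          exact hj'⟩
        left_inv := fun j => rfl
        right_inv := by
          rintro ⟨j, hj⟩
          obtain ⟨j', hj', rfl⟩ := Finset.mem_map.1 hj
          rfl }
    have hcard : Fintype.card {j // ¬ P j} = n + d - k := by
      rw [Fintype.card_subtype_compl, ← Fintype.card_congr e]
      simp [hCs]
    rw [sum_glue_const P (fun i => i ∈ Rs) (by simp) _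
      (fun β => ∏ j : {j // j ∈ Cs}, B (β (e j)).1 j.1), hcard, nsmul_eq_mul]
    · congr 1
      refine Fintype.sum_equiv ⟨fun β => (e.trans β).symm, fun β => e.symm.trans β.symm,
        fun β => by ext; simp, fun β => by ext; simp⟩ _ _ fun β => ?_
      refine Fintype.prod_equiv (e.trans β) _ _ fun j => ?_
      simp
    · intro β γ
      rw [← Finset.prod_coe_sort]
      refine Fintype.prod_congr _ _ fun j => ?_
      exact congrArg (fun i => B i j.1) (glue_pos β γ (e j))
  · intro Rs _ hRs
    rw [Finset.filter_false_of_mem, Finset.sum_empty]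
    rintro σ - rfl
    refine hRs (Finset.mem_filter.2 ⟨Finset.mem_univ _, ?_⟩)
    rw [← hCs]
    exact Finset.card_image_of_injective _ (σ.injective.comp Sum.inl_injective)

/-- For an `m × n` monotone column matrix `A` with `m ≥ n`, and any `k ≤ n`,
the `k`-permanent `per_k(J_{m,n} Z_n + A)` is real stable in `z_1,…,z_n`. -/
theorem perK_monotone_stable (m n : ℕ) (hmn : n ≤ m)
    (A : Matrix (Fin m) (Fin n) ℝ) (hA : MonotoneColumn A)
    (k : ℕ) (hk : k ≤ n) :
    RealStable (perK (fun (i : Fin m) (j : Fin n) =>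
      (MvPolynomial.X j : MvPolynomial (Fin n) ℝ) + MvPolynomial.C (A i j)) k) := by
  obtain ⟨d, rfl⟩ := Nat.exists_eq_add_of_le hmn
  refine Or.inr fun w hw => ?_
  have heval : MvPolynomial.eval w (MvPolynomial.map (algebraMap ℝ ℂ)
      (perK (fun (i : Fin (n + d)) (j : Fin n) =>
        (MvPolynomial.X j : MvPolynomial (Fin n) ℝ) + MvPolynomial.C (A i j)) k)) =
      perK (fun i j => w j + (A i j : ℂ)) k := by
    simp [perK, map_sum, map_prod]
  rw [heval]
  set p : Polynomial ℂ := bijPerm (fun (i : Fin (n + d)) (j : Fin n ⊕ Fin d) =>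
      Sum.elim (fun j => Polynomial.X + Polynomial.C (w j + (A i j : ℂ)))
        (fun _ => Polynomial.C Complex.I) j) with hp
  have hcoeff : ∀ k ≤ n, p.coeff (n - k) = Complex.I ^ d *
      ((n + d - k).factorial * perK (fun (i : Fin (n + d)) j => w j + (A i j : ℂ)) k) := fun k hk =>
    perK_eq_coeff (fun i j => w j + (A i j : ℂ)) k hk
  have hroots : ∀ τ : ℂ, 0 ≤ τ.im → p.eval τ ≠ 0 := by
    intro τ hτ
    have h1 : p.eval τ = bijPerm (fun (i : Fin (n + d)) (j : Fin n ⊕ Fin d) =>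
        Sum.elim (fun j => w j + τ) (fun _ => Complex.I) j +
        ((Sum.elim (fun j => A i j) (fun _ => 0) j : ℝ) : ℂ)) := by
      rw [hp]
      unfold bijPerm
      rw [Polynomial.eval_finsetSum]
      refine Finset.sum_congr rfl fun σ _ => ?_
      rw [Polynomial.eval_prod]
      refine Finset.prod_congr rfl fun j _ => ?_
      rcases j with j | j
      · simp; ring
      · simp
    rw [h1]
    refine bijPerm_monotone_ne_zero (by simp) Finset.univ _ ?_
      (fun j hj => absurd (Finset.mem_univ j) hj) _ ?_
    · rintro i i' (j | j) h
      · exact hA i i' j h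
      · exact le_rfl
    · rintro (j | j)
      · have := hw j
        simp only [Sum.elim_inl, Complex.add_im]
        linarith
      · simp
  -- the coefficient of degree `n` is a nonzero multiple of `perK _ 0 = 1`
  have hdeg : n ≤ p.natDegree := by
    refine Polynomial.le_natDegree_of_ne_zero ?_
    have := hcoeff 0 (Nat.zero_le n)
    rw [Nat.sub_zero] at this
    rw [this]
    rw [show perK (fun (i : Fin (n + d)) (j : Fin n) => w j + (A i j : ℂ)) 0 = 1 from perK_zero _,
      mul_one]
    exact mul_ne_zero (pow_ne_zero _ Complex.I_ne_zero) (by exact_mod_cast Nat.factorial_ne_zero _)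
  have hne := coeff_ne_zero_of_roots_im_neg (n - k) p hroots ((Nat.sub_le n k).trans hdeg)
  rw [hcoeff k hk] at hne
  exact right_ne_zero_of_mul (right_ne_zero_of_mul hne)
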